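/- Let k = (k₁,k₂,k₃) and l = (l₁,l₂,l₃) be triples of integers with k₁+k₂+k₃ = l₁+l₂+l₃, and suppose l₃ does not lie in the closed interval [min(k₁,k₂,k₃), max(k₁,k₂,k₃)]. Then for every g ∈ SU(3), Q(g·diag(ik₁,ik₂,ik₃)·g⁻¹, diag(i,i,−2i)) ≠ l₁ + l₂ − 2l₃, where Q(A,B) = Re tr(AB*). -/

import Mathlib

/-!
Write `H = g diag(k) g⁻¹`. The central direction is `i(1 - 3 E₃₃)`, so pairing `iH` with it gives
`tr H - 3 H₃₃ = ∑ kⱼ - 3 H₃₃`. Since the traces of `k` and `l` agree, equality with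
`l₁ + l₂ - 2l₃ = ∑ lⱼ - 3l₃` would force `H₃₃ = l₃`. But `H₃₃ = ∑ |g₃ⱼ|² kⱼ` is a convex
combination of the `kⱼ`, because the rows of a unitary matrix are unit vectors.
-/

open Matrix Complex

lemma notMem_convexHull_range_of_forall_lt {ι 𝕜 : Type*} [Field 𝕜] [LinearOrder 𝕜]
    [IsStrictOrderedRing 𝕜] {x : ι → 𝕜} {a : 𝕜} (h : (∀ i, a < x i) ∨ ∀ i, x i < a) :
    a ∉ convexHull 𝕜 (Set.range x) := by
  intro ha
  rcases h with hlt | hgt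
  · exact lt_irrefl a <| convexHull_min (Set.range_subset_iff.mpr hlt) (convex_Ioi a) ha
  · exact lt_irrefl a <| convexHull_min (Set.range_subset_iff.mpr hgt) (convex_Iio a) ha

lemma notMem_convexHull_range_of_lt_min_or_max_lt {𝕜 : Type*} [Field 𝕜] [LinearOrder 𝕜]
    [IsStrictOrderedRing 𝕜] {x : Fin 3 → 𝕜} {a : 𝕜}
    (h : a < min (min (x 0) (x 1)) (x 2) ∨ max (max (x 0) (x 1)) (x 2) < a) :
    a ∉ convexHull 𝕜 (Set.range x) :=
  notMem_convexHull_range_of_forall_lt <| by simpa [Fin.forall_fin_succ, and_assoc] using h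

lemma sum_fin_three_sub_three_mul_last {R : Type*} [CommRing R] (x : Fin 3 → R) :
    ∑ i, x i - 3 * x 2 = x 0 + x 1 - 2 * x 2 := by
  rw [Fin.sum_univ_three]
  ring

section DiagonalConjugation

variable {m n 𝕜 : Type*} [Fintype n] [RCLike 𝕜]

lemma sum_norm_sq_row_eq_one [DecidableEq m] {U : Matrix m n 𝕜} (hU : U * Uᴴ = 1) (i : m) :
    ∑ j, ‖U i j‖ ^ 2 = 1 := by
  have entry : (U * Uᴴ) i i = 1 := by rw [hU, one_apply_eq]
  simp only [mul_apply, conjTranspose_apply, RCLike.star_def, RCLike.mul_conj] at entry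
  exact_mod_cast entry

variable [DecidableEq n]

lemma mul_diagonal_mul_conjTranspose_apply_self (U : Matrix m n 𝕜) (d : n → 𝕜) (i : m) :
    (U * diagonal d * Uᴴ) i i = ∑ j, ‖U i j‖ ^ 2 • d j := by
  rw [mul_apply]
  refine Finset.sum_congr rfl fun j _ => ?_
  rw [mul_diagonal, conjTranspose_apply, mul_right_comm, RCLike.star_def, RCLike.mul_conj,
    RCLike.real_smul_eq_coe_mul, RCLike.ofReal_pow]

variable [DecidableEq m] {U : Matrix m n 𝕜}

lemma mul_diagonal_mul_conjTranspose_apply_self_mem_convexHull (hU : U * Uᴴ = 1) (d : n → 𝕜)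
    (i : m) : (U * diagonal d * Uᴴ) i i ∈ convexHull ℝ (Set.range d) :=
  mem_convexHull_of_exists_fintype (fun j => ‖U i j‖ ^ 2) d (fun _ => sq_nonneg _)
    (sum_norm_sq_row_eq_one hU i) Set.mem_range_self
    (mul_diagonal_mul_conjTranspose_apply_self U d i).symm

lemma re_mul_diagonal_mul_conjTranspose_apply_self_mem_convexHull (hU : U * Uᴴ = 1) (d : n → 𝕜)
    (i : m) : RCLike.re ((U * diagonal d * Uᴴ) i i) ∈
      convexHull ℝ (Set.range fun j => RCLike.re (d j)) := by
  have image_mem := Set.mem_image_of_mem RCLike.reLm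
    (mul_diagonal_mul_conjTranspose_apply_self_mem_convexHull hU d i)
  rwa [LinearMap.image_convexHull, ← Set.range_comp] at image_mem

end DiagonalConjugation

section TraceForm

variable {n : Type*} [Fintype n]

/-- The form `Q(A, B) = Re tr(A Bᴴ)`, whose restriction to `𝔲(n)` is the `Ad`-invariant inner
product. -/
def reTraceForm (A B : Matrix n n ℂ) : ℝ := (trace (A * Bᴴ)).re

lemma reTraceForm_I_smul_I_smul (A B : Matrix n n ℂ) :
    reTraceForm (I • A) (I • B) = reTraceForm A B := by
  simp [reTraceForm, smul_smul]

variable [DecidableEq n]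

/-- The direction `i(1 - c E_pp)` in `𝔲(n)`, central in the subalgebra `𝔲(n - 1) ⊕ 𝔲(1)` that
splits off the `p`-th coordinate; it is traceless when `c = n`. -/
def centralDirection (p : n) (c : ℝ) : Matrix n n ℂ := I • (1 - single p p (c : ℂ))

lemma diagonal_eq_centralDirection :
    diagonal ![I, I, -2 * I] = centralDirection (2 : Fin 3) 3 := by
  ext i j
  fin_cases i <;> fin_cases j <;> simp [centralDirection]
  ring

lemma reTraceForm_one_sub_single (A : Matrix n n ℂ) (p : n) (c : ℝ) :
    reTraceForm A (1 - single p p (c : ℂ)) = A.trace.re - c * (A p p).re := by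
  simp [reTraceForm, mul_sub, trace_mul_single, mul_comm c]

lemma trace_conj_of_mul_eq_one {R : Type*} [CommRing R] {U V : Matrix n n R} (hUV : U * V = 1)
    (A : Matrix n n R) : (U * A * V).trace = A.trace := by
  rw [trace_mul_cycle, mul_eq_one_comm.mp hUV, Matrix.one_mul]

lemma reTraceForm_conj_centralDirection {g : Matrix n n ℂ} (hg : g * gᴴ = 1) (k : n → ℝ) (p : n)
    (c : ℝ) :
    reTraceForm (g * diagonal (fun i => (k i : ℂ) * I) * g⁻¹) (centralDirection p c) =
      ∑ i, k i - c * ((g * diagonal (fun i => (k i : ℂ)) * gᴴ) p p).re := by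
  have factor_I : g * diagonal (fun i => (k i : ℂ) * I) * gᴴ =
      I • (g * diagonal (fun i => (k i : ℂ)) * gᴴ) := by
    have diagonal_factor : diagonal (fun i => (k i : ℂ) * I) = I • diagonal fun i => (k i : ℂ) := by
      simp only [← diagonal_smul, Pi.smul_def, smul_eq_mul, mul_comm I]
    rw [diagonal_factor, Matrix.mul_smul, Matrix.smul_mul]
  rw [inv_eq_right_inv hg, factor_I, centralDirection, reTraceForm_I_smul_I_smul,
    reTraceForm_one_sub_single, trace_conj_of_mul_eq_one hg, trace_diagonal, re_sum]
  simp only [ofReal_re]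

end TraceForm

theorem eschenburg_horizontality_estimate_general {n : Type*} [Fintype n] [DecidableEq n]
    (k l : n → ℝ) (hsum : ∑ i, k i = ∑ i, l i) (p : n) (hl : l p ∉ convexHull ℝ (Set.range k))
    (c : ℝ) (hc : c ≠ 0) (g : Matrix n n ℂ) (hg : g * gᴴ = 1) :
    reTraceForm (g * diagonal (fun i => (k i : ℂ) * I) * g⁻¹) (centralDirection p c) ≠
      ∑ i, l i - c * l p := by
  rw [reTraceForm_conj_centralDirection hg, hsum]
  intro h
  have entry_eq : ((g * diagonal (fun i => (k i : ℂ)) * gᴴ) p p).re = l p :=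
    mul_left_cancel₀ hc (sub_right_injective h)
  have entry_mem := re_mul_diagonal_mul_conjTranspose_apply_self_mem_convexHull hg
    (fun i => (k i : ℂ)) p
  simp only [RCLike.re_to_complex, entry_eq, ofReal_re] at entry_mem
  exact hl entry_mem

/-- **Horizontality estimate for Eschenburg spaces (Ziller, proof of
Prop. 4.6).**  Let `k, l` be integer triples with `∑kᵢ = ∑lᵢ` and suppose `l₃`
does not lie in `[min kᵢ, max kᵢ]`.  Then for every `g ∈ SU(3)`,
`Q(g·diag(ik₁,ik₂,ik₃)·g⁻¹, diag(i,i,−2i)) ≠ l₁ + l₂ − 2l₃`, where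
`Q(A,B) = Re tr(AB*)`. -/
theorem eschenburg_horizontality_estimate
    (k l : Fin 3 → ℤ) (hsum : ∑ i, k i = ∑ i, l i)
    (hl : l 2 < min (min (k 0) (k 1)) (k 2) ∨ max (max (k 0) (k 1)) (k 2) < l 2)
    (g : Matrix (Fin 3) (Fin 3) ℂ) (hg : g * gᴴ = 1) (hdet : g.det = 1) :
    (Matrix.trace (g * Matrix.diagonal (fun i => (k i : ℂ) * Complex.I) * g⁻¹ *
        (Matrix.diagonal ![Complex.I, Complex.I, -2 * Complex.I])ᴴ)).re
      ≠ ((l 0 + l 1 - 2 * l 2 : ℤ) : ℝ) := by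
  have l_outside : (l 2 : ℝ) ∉ convexHull ℝ (Set.range fun i => (k i : ℝ)) :=
    notMem_convexHull_range_of_lt_min_or_max_lt (mod_cast hl)
  rw [diagonal_eq_centralDirection]
  simpa [reTraceForm, sum_fin_three_sub_three_mul_last] using
    eschenburg_horizontality_estimate_general (fun i => (k i : ℝ)) (fun i => (l i : ℝ))
      (mod_cast hsum) 2 l_outside 3 three_ne_zero g hg
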